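/- Let S be a finite nonabelian simple group and t a positive integer. Then S^t (the direct power of t copies of S) is 2-generated if and only if t ≤ P_S(2)·|S|^2/|Aut(S)|, where P_S(2) is the probability that two uniformly random elements of S generate S. -/

import Mathlib

open Subgroup

/-- `P_S(2)`: the probability that two uniformly random elements of `S` generate `S`. -/
noncomputable def genProb2 (S : Type*) [Group S] : ℝ :=
  (Nat.card {v : S × S // Subgroup.closure {v.1, v.2} = ⊤} : ℝ) / (Nat.card S : ℝ) ^ 2

/-!
Following P. Hall: arrange a family of `κ` elements of `S ^ ι` as a matrix whose `i`-th column is a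
`κ`-tuple in `S`. It generates `S ^ ι` if and only if every column generates `S` and no two columns
are related by an automorphism of `S`. Indeed, by Goursat's lemma a subdirect product of two simple
groups is the graph of an isomorphism or everything, and a subgroup of a finite product of perfect
groups which projects onto any two factors is everything. Hence `S ^ ι` is generated by `κ` elements
if and only if `ι` embeds into the set of `Aut S`-orbits of generating `κ`-tuples of `S`. As
`Aut S` acts freely on these tuples, the number of orbits is the number of generating tuples divided
by `|Aut S|`.
-/

open Group MulAction

theorem isPerfect_of_isSimpleGroup {S : Type*} [Group S] [IsSimpleGroup S]
    (hna : ¬ ∀ a b : S, a * b = b * a) : IsPerfect S := by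
  have hne : commutator S ≠ ⊥ := fun h =>
    hna ((commutator_eq_bot_iff S).1 h).is_comm.comm
  exact ⟨(Normal.eq_bot_or_eq_top inferInstance).resolve_left hne⟩

section Goursat

variable {G K : Type*} [Group G] [Group K] {I : Subgroup (G × K)}

theorem eq_top_of_goursatFst_eq_top (hI : Function.Surjective (Prod.snd ∘ I.subtype))
    (h : I.goursatFst = ⊤) : I = ⊤ := by
  rw [eq_top_iff]
  rintro ⟨g, k⟩ -
  obtain ⟨⟨⟨g', k⟩, hmem⟩, rfl⟩ := hI k
  have hdiv : (g * g'⁻¹, 1) ∈ I := mem_goursatFst.1 (h ▸ mem_top _)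
  simpa using mul_mem hdiv hmem

theorem eq_top_of_goursatSnd_eq_top (hI : Function.Surjective (Prod.fst ∘ I.subtype))
    (h : I.goursatSnd = ⊤) : I = ⊤ := by
  rw [eq_top_iff]
  rintro ⟨g, k⟩ -
  obtain ⟨⟨⟨g, k'⟩, hmem⟩, rfl⟩ := hI g
  have hdiv : (1, k * k'⁻¹) ∈ I := mem_goursatSnd.1 (h ▸ mem_top _)
  simpa using mul_mem hdiv hmem

theorem fst_injective_of_goursatSnd_eq_bot (h : I.goursatSnd = ⊥) :
    Function.Injective (Prod.fst ∘ I.subtype) := by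
  refine (injective_iff_map_eq_one ((MonoidHom.fst G K).comp I.subtype)).2 ?_
  rintro ⟨⟨g, k⟩, hmem⟩ (rfl : g = 1)
  obtain rfl : k = 1 := by simpa [h] using mem_goursatSnd.2 hmem
  rfl

theorem snd_injective_of_goursatFst_eq_bot (h : I.goursatFst = ⊥) :
    Function.Injective (Prod.snd ∘ I.subtype) := by
  refine (injective_iff_map_eq_one ((MonoidHom.snd G K).comp I.subtype)).2 ?_
  rintro ⟨⟨g, k⟩, hmem⟩ (rfl : k = 1)
  obtain rfl : g = 1 := by simpa [h] using mem_goursatFst.2 hmem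
  rfl

theorem eq_top_or_eq_graph_of_isSimpleGroup [IsSimpleGroup G] [IsSimpleGroup K]
    (hfst : Function.Surjective (Prod.fst ∘ I.subtype))
    (hsnd : Function.Surjective (Prod.snd ∘ I.subtype)) :
    I = ⊤ ∨ ∃ e : G ≃* K, I = e.toMonoidHom.graph := by
  rcases (normal_goursatFst hfst).eq_bot_or_eq_top with hG | hG
  · rcases (normal_goursatSnd hsnd).eq_bot_or_eq_top with hK | hK
    · exact .inr (exists_mulEquiv_eq_graph ⟨fst_injective_of_goursatSnd_eq_bot hK, hfst⟩
        ⟨snd_injective_of_goursatFst_eq_bot hG, hsnd⟩)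
    · exact .inl (eq_top_of_goursatSnd_eq_top hfst hK)
  · exact .inl (eq_top_of_goursatFst_eq_top hsnd hG)

theorem map_prod_eq_top_or_exists_mulEquiv [IsSimpleGroup G] [IsSimpleGroup K] {P : Type*}
    [Group P] {H : Subgroup P} {f : P →* G} {g : P →* K} (hf : H.map f = ⊤) (hg : H.map g = ⊤) :
    H.map (f.prod g) = ⊤ ∨ ∃ e : G ≃* K, ∀ x ∈ H, e (f x) = g x := by
  have hfst : Function.Surjective (Prod.fst ∘ (H.map (f.prod g)).subtype) := fun a => by
    obtain ⟨x, hx, rfl⟩ := mem_map.1 (hf ▸ mem_top a)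
    exact ⟨⟨f.prod g x, mem_map_of_mem _ hx⟩, rfl⟩
  have hsnd : Function.Surjective (Prod.snd ∘ (H.map (f.prod g)).subtype) := fun b => by
    obtain ⟨x, hx, rfl⟩ := mem_map.1 (hg ▸ mem_top b)
    exact ⟨⟨f.prod g x, mem_map_of_mem _ hx⟩, rfl⟩
  refine (eq_top_or_eq_graph_of_isSimpleGroup hfst hsnd).imp_right ?_
  rintro ⟨e, he⟩
  refine ⟨e, fun x hx => ?_⟩
  have hgraph : f.prod g x ∈ e.toMonoidHom.graph := he ▸ mem_map_of_mem _ hx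
  exact MonoidHom.mem_graph.1 hgraph

end Goursat

section Pi

variable {ι : Type*} {G : ι → Type*} [∀ i, Group (G i)]

/-- The subgroup of those elements of `H ≤ ∏ i, G i` whose coordinates in `F` are trivial. A
subgroup of a product contains a factor as soon as its elements trivial on all the other coordinates
surject onto that factor. -/
def trivialOn (H : Subgroup (∀ i, G i)) (F : Set ι) : Subgroup (∀ i, G i) :=
  H ⊓ pi F fun _ => ⊥

theorem mem_trivialOn {H : Subgroup (∀ i, G i)} {F : Set ι} {x : ∀ i, G i} :
    x ∈ trivialOn H F ↔ x ∈ H ∧ ∀ i ∈ F, x i = 1 := by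
  simp only [trivialOn, mem_inf, mem_pi, mem_bot]

theorem commutator_trivialOn_le (H : Subgroup (∀ i, G i)) (E F : Set ι) :
    ⁅trivialOn H E, trivialOn H F⁆ ≤ trivialOn H (E ∪ F) := by
  rw [commutator_le]
  intro x hx y hy
  rw [mem_trivialOn] at hx hy ⊢
  refine ⟨H.mul_mem (H.mul_mem (H.mul_mem hx.1 hy.1) (H.inv_mem hx.1)) (H.inv_mem hy.1), ?_⟩
  rintro i (hi | hi)
  · simp [commutatorElement_def, hx.2 i hi]
  · simp [commutatorElement_def, hy.2 i hi]

theorem map_eval_trivialOn_eq_top {H : Subgroup (∀ i, G i)} {j : ι} [IsPerfect (G j)]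
    (hH : H.map (Pi.evalMonoidHom G j) = ⊤)
    (hpair : ∀ i ≠ j, (trivialOn H {i}).map (Pi.evalMonoidHom G j) = ⊤)
    {F : Set ι} (hF : F.Finite) (hj : j ∉ F) :
    (trivialOn H F).map (Pi.evalMonoidHom G j) = ⊤ := by
  induction F, hF using Set.Finite.induction_on with
  | empty => simpa [trivialOn, pi_empty] using hH
  | @insert i F _ _ ih =>
    rw [Set.mem_insert_iff, not_or] at hj
    rw [eq_top_iff, ← IsPerfect.commutator_eq_top (G := G j)]
    calc commutator (G j)
        ≤ ⁅trivialOn H {i}, trivialOn H F⁆.map (Pi.evalMonoidHom G j) :=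
          commutator_le_map_commutator (hpair i (Ne.symm hj.1)).ge (ih hj.2).ge
      _ ≤ (trivialOn H (insert i F)).map (Pi.evalMonoidHom G j) :=
          map_mono (commutator_trivialOn_le H {i} F)

theorem eq_top_of_map_pair_eq_top [Finite ι] [∀ i, IsPerfect (G i)] {H : Subgroup (∀ i, G i)}
    (hH : ∀ i, H.map (Pi.evalMonoidHom G i) = ⊤)
    (hpair : ∀ i j, i ≠ j → H.map ((Pi.evalMonoidHom G i).prod (Pi.evalMonoidHom G j)) = ⊤) :
    H = ⊤ := by
  classical
  have htriv : ∀ j, ∀ i ≠ j, (trivialOn H {i}).map (Pi.evalMonoidHom G j) = ⊤ := by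
    intro j i hij
    rw [eq_top_iff]
    intro s _
    obtain ⟨x, hx, hxs⟩ := mem_map.1 (hpair i j hij ▸ mem_top ((1, s) : G i × G j))
    obtain ⟨hxi, hxj⟩ := Prod.ext_iff.1 hxs
    exact ⟨x, mem_trivialOn.2 ⟨hx, by simpa using hxi⟩, hxj⟩
  rw [eq_top_iff]
  intro x _
  refine pi_mem_of_mulSingle_mem x fun j => ?_
  obtain ⟨y, hy, hyj⟩ := mem_map.1 <|
    map_eval_trivialOn_eq_top (hH j) (htriv j) (Set.toFinite {j}ᶜ) (by simp) ▸ mem_top (x j)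
  rw [mem_trivialOn] at hy
  have hsingle : Pi.mulSingle j (x j) = y := by
    ext k
    obtain rfl | hk := eq_or_ne k j
    · simpa using hyj.symm
    · rw [Pi.mulSingle_eq_of_ne hk, hy.2 k hk]
  exact hsingle ▸ hy.1

theorem eq_top_of_forall_not_exists_mulEquiv [Finite ι] [∀ i, IsSimpleGroup (G i)]
    [∀ i, IsPerfect (G i)] {H : Subgroup (∀ i, G i)}
    (hH : ∀ i, H.map (Pi.evalMonoidHom G i) = ⊤)
    (hlink : ∀ i j, i ≠ j → ¬ ∃ e : G i ≃* G j, ∀ x ∈ H, e (x i) = x j) : H = ⊤ :=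
  eq_top_of_map_pair_eq_top hH fun i j hij =>
    (map_prod_eq_top_or_exists_mulEquiv (hH i) (hH j)).resolve_right (hlink i j hij)

theorem not_exists_mulEquiv_of_closure_eq_top {s : Set (∀ i, G i)} (hs : closure s = ⊤)
    {i j : ι} (hij : i ≠ j) [Nontrivial (G i)] :
    ¬ ∃ e : G i ≃* G j, ∀ x ∈ s, e (x i) = x j := by
  classical
  rintro ⟨e, he⟩
  have heq : e.toMonoidHom.comp (Pi.evalMonoidHom G i) = Pi.evalMonoidHom G j :=
    MonoidHom.eq_of_eqOn_dense hs he
  obtain ⟨g, hg⟩ := exists_ne (1 : G i)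
  have hone : e g = 1 := by
    simpa [Pi.mulSingle_eq_of_ne hij.symm] using DFunLike.congr_fun heq (Pi.mulSingle i g)
  exact hg (e.map_eq_one_iff.1 hone)

theorem closure_pi_eq_top_iff [Finite ι] [∀ i, IsSimpleGroup (G i)] [∀ i, IsPerfect (G i)]
    {s : Set (∀ i, G i)} :
    closure s = ⊤ ↔ (∀ i, closure (Function.eval i '' s) = ⊤) ∧
      ∀ i j, i ≠ j → ¬ ∃ e : G i ≃* G j, ∀ x ∈ s, e (x i) = x j := by
  have hmap : ∀ i, closure (Function.eval i '' s) = (closure s).map (Pi.evalMonoidHom G i) :=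
    fun i => (MonoidHom.map_closure (Pi.evalMonoidHom G i) s).symm
  simp only [hmap]
  refine ⟨fun hs => ⟨fun i => ?_, fun i j hij =>
    not_exists_mulEquiv_of_closure_eq_top hs hij⟩, ?_⟩
  · rw [hs, map_top_of_surjective _ (Function.surjective_eval i)]
  · rintro ⟨hcoord, hlink⟩
    exact eq_top_of_forall_not_exists_mulEquiv hcoord fun i j hij ⟨e, he⟩ =>
      hlink i j hij ⟨e, fun x hx => he x (subset_closure hx)⟩

end Pi

section GeneratingTuples

variable (κ ι G : Type*) [Group G]

/-- The tuples `v : κ → G` whose entries generate `G`, with the entrywise action of the automorphism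
group of `G`. -/
def generatingTuples : SubMulAction (MulAut G) (κ → G) where
  carrier := {v | closure (Set.range v) = ⊤}
  smul_mem' φ v hv := by
    change closure (Set.range (φ ∘ v)) = ⊤
    rw [Set.range_comp]
    calc closure (φ '' Set.range v)
        = (closure (Set.range v)).map φ.toMonoidHom := (φ.toMonoidHom.map_closure _).symm
      _ = (⊤ : Subgroup G).map φ.toMonoidHom := congrArg _ hv
      _ = ⊤ := map_top_of_surjective _ φ.surjective

/-- `P_G(κ)`: the probability that a uniformly random tuple `κ → G` generates `G`. Meaningful only
for finite `κ` and `G`, as `Nat.card` of an infinite type is `0`. -/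
noncomputable def genProb : ℝ :=
  (Nat.card (generatingTuples κ G) : ℝ) / (Nat.card G : ℝ) ^ Nat.card κ

variable {κ ι G}

theorem mem_generatingTuples {v : κ → G} :
    v ∈ generatingTuples κ G ↔ closure (Set.range v) = ⊤ := Iff.rfl

theorem stabilizer_generatingTuples (v : generatingTuples κ G) :
    stabilizer (MulAut G) v = ⊥ := by
  rw [eq_bot_iff]
  intro φ hφ
  have hfix : ∀ k, φ (v.1 k) = v.1 k := congrFun (congrArg Subtype.val hφ)
  have hid : φ.toMonoidHom = MonoidHom.id G :=
    MonoidHom.eq_of_eqOn_dense v.2 (Set.forall_mem_range.2 hfix)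
  exact mem_bot.2 (MulEquiv.ext fun g => DFunLike.congr_fun hid g)

variable (κ G) in
theorem card_generatingTuples :
    Nat.card (generatingTuples κ G) =
      Nat.card (orbitRel.Quotient (MulAut G) (generatingTuples κ G)) * Nat.card (MulAut G) := by
  rw [← Nat.card_prod]
  exact Nat.card_congr (selfEquivOrbitsQuotientProd stabilizer_generatingTuples)

variable (κ G) in
theorem genProb_mul_card_pow_div_card_mulAut [Finite G] :
    genProb κ G * (Nat.card G : ℝ) ^ Nat.card κ / (Nat.card (MulAut G) : ℝ) =
      Nat.card (orbitRel.Quotient (MulAut G) (generatingTuples κ G)) := by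
  have hG : (Nat.card G : ℝ) ≠ 0 := Nat.cast_ne_zero.2 Nat.card_pos.ne'
  have hAut : (Nat.card (MulAut G) : ℝ) ≠ 0 := Nat.cast_ne_zero.2 Nat.card_pos.ne'
  rw [genProb, div_mul_cancel₀ _ (pow_ne_zero _ hG), card_generatingTuples, Nat.cast_mul,
    mul_div_cancel_right₀ _ hAut]

theorem mk_eq_mk_iff_exists_mulAut {v w : generatingTuples κ G} :
    (Quotient.mk'' v : orbitRel.Quotient (MulAut G) (generatingTuples κ G)) = Quotient.mk'' w ↔
      ∃ φ : MulAut G, ∀ k, φ (w.1 k) = v.1 k := by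
  simp only [Quotient.eq'', orbitRel_apply, mem_orbit_iff, Subtype.ext_iff, funext_iff]
  rfl

theorem closure_range_swap_eq_top_iff [Finite ι] [IsSimpleGroup G] [IsPerfect G]
    {c : ι → κ → G} :
    closure (Set.range (Function.swap c)) = ⊤ ↔
      ∃ hc : ∀ i, c i ∈ generatingTuples κ G, Function.Injective fun i =>
        (Quotient.mk'' ⟨c i, hc i⟩ : orbitRel.Quotient (MulAut G) (generatingTuples κ G)) := by
  rw [closure_pi_eq_top_iff, ← exists_prop]
  have hcolumn : ∀ i, Function.eval i '' Set.range (Function.swap c) = Set.range (c i) :=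
    fun i => (Set.range_comp _ _).symm
  simp only [hcolumn, mem_generatingTuples, Set.forall_mem_range]
  refine exists_congr fun hc => ?_
  simp only [Function.Injective, mk_eq_mk_iff_exists_mulAut]
  exact ⟨fun h j i he => by_contra fun hij => h i j (Ne.symm hij) he,
    fun h i j hij he => hij (h he).symm⟩

theorem exists_closure_range_pi_eq_top_iff [Finite ι] [IsSimpleGroup G] [IsPerfect G] :
    (∃ v : κ → ι → G, closure (Set.range v) = ⊤) ↔
      Nonempty (ι ↪ orbitRel.Quotient (MulAut G) (generatingTuples κ G)) := by
  constructor
  · rintro ⟨v, hv⟩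
    obtain ⟨_, hinj⟩ := closure_range_swap_eq_top_iff (c := Function.swap v).1 hv
    exact ⟨⟨_, hinj⟩⟩
  · rintro ⟨e⟩
    refine ⟨Function.swap fun i => (e i).out.1,
      closure_range_swap_eq_top_iff.2 ⟨fun i => (e i).out.2, ?_⟩⟩
    simpa only [Subtype.coe_eta, Quotient.mk''_eq_mk, Quotient.out_eq] using e.injective

theorem range_finTwoArrowEquiv_symm {α : Type*} (v : α × α) :
    Set.range ((finTwoArrowEquiv α).symm v) = {v.1, v.2} := by
  simp [Set.pair_comm]

variable (G) in
theorem exists_closure_pair_eq_top_iff :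
    (∃ a b : G, closure {a, b} = ⊤) ↔ ∃ v : Fin 2 → G, closure (Set.range v) = ⊤ := by
  simp only [(finTwoArrowEquiv G).exists_congr_left, range_finTwoArrowEquiv_symm, Prod.exists]

variable (G) in
theorem genProb2_eq_genProb : genProb2 G = genProb (Fin 2) G := by
  have hcard : Nat.card {v : G × G // closure {v.1, v.2} = ⊤} =
      Nat.card (generatingTuples (Fin 2) G) :=
    Nat.card_congr <| (finTwoArrowEquiv G).symm.subtypeEquiv fun v => by
      rw [mem_generatingTuples, range_finTwoArrowEquiv_symm]
  rw [genProb2, genProb, hcard, Nat.card_fin]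

end GeneratingTuples

theorem stmt6_general (κ ι S : Type*) [Finite κ] [Finite ι] [Group S] [Finite S] [IsSimpleGroup S]
    (hna : ¬ ∀ a b : S, a * b = b * a) :
    (∃ v : κ → ι → S, closure (Set.range v) = ⊤) ↔
      (Nat.card ι : ℝ) ≤
        genProb κ S * (Nat.card S : ℝ) ^ Nat.card κ / (Nat.card (MulAut S) : ℝ) := by
  have := isPerfect_of_isSimpleGroup hna
  have := Fintype.ofFinite ι
  have := Fintype.ofFinite (orbitRel.Quotient (MulAut S) (generatingTuples κ S))
  rw [exists_closure_range_pi_eq_top_iff, genProb_mul_card_pow_div_card_mulAut, Nat.cast_le,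
    Function.Embedding.nonempty_iff_card_le, Nat.card_eq_fintype_card, Nat.card_eq_fintype_card]

/-- `S^t` is 2-generated if and only if `t ≤ P_S(2)·|S|²/|Aut S|`. -/
theorem stmt6 (S : Type*) [Group S] [Finite S] [IsSimpleGroup S]
    (hna : ¬ ∀ a b : S, a * b = b * a) (t : ℕ) (ht : 0 < t) :
    (∃ a b : Fin t → S, Subgroup.closure {a, b} = ⊤) ↔
      (t : ℝ) ≤ genProb2 S * (Nat.card S : ℝ) ^ 2 / (Nat.card (MulAut S) : ℝ) := by
  rw [exists_closure_pair_eq_top_iff, genProb2_eq_genProb]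
  simpa only [Nat.card_fin] using stmt6_general (Fin 2) (Fin t) S hna
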